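/- For all q > 0, ε > 0 and α > 1: lim_{s→0⁺} Σ_{k=1}^∞ exp(−q·s^{−ε·α^k}) = 0, where the limit is taken as s tends to 0 from within the interval (0, 1) and s^{−ε·α^k} denotes (1/s)^{ε·α^k}; in particular, for every s ∈ (0, 1) the series Σ_{k=1}^∞ exp(−q·s^{−ε·α^k}) converges. -/

import Mathlib

open Filter

theorem ves_summable (q ε α : ℝ) (hq : 0 < q) (hε : 0 < ε) (hα : 1 < α) (s : ℝ)
    (hs : s ∈ Set.Ioo (0 : ℝ) 1) :
    Summable (fun k : ℕ => Real.exp (-q * (1 / s) ^ (ε * α ^ (k + 1)))) := by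
  have hx : 1 < 1 / s := by rw [lt_div_iff₀ hs.1]; linarith [hs.2]
  have hL : 0 < Real.log (1 / s) := Real.log_pos hx
  have hα' : 0 < α - 1 := by linarith
  have hc : 0 < q * (Real.log (1 / s) * (ε * (α - 1))) := by positivity
  have hS : Summable (fun k : ℕ =>
      Real.exp ((k : ℝ) * (-(q * (Real.log (1 / s) * (ε * (α - 1))))))) :=
    Real.summable_exp_nat_mul_iff.mpr (by linarith)
  refine Summable.of_nonneg_of_le (fun _ => (Real.exp_pos _).le) (fun k => ?_) hS
  apply Real.exp_le_exp.mpr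
  have h1 : (k : ℝ) * (α - 1) ≤ α ^ (k + 1) := by
    have := one_add_mul_sub_le_pow (a := α) (by linarith) (k + 1)
    push_cast at this
    linarith
  have h2 : Real.log (1 / s) * (ε * ((k : ℝ) * (α - 1))) ≤ (1 / s) ^ (ε * α ^ (k + 1)) := by
    rw [Real.rpow_def_of_pos (by linarith)]
    have h3 : Real.log (1 / s) * (ε * ((k : ℝ) * (α - 1)))
        ≤ Real.log (1 / s) * (ε * α ^ (k + 1)) := by gcongr
    linarith [Real.add_one_le_exp (Real.log (1 / s) * (ε * α ^ (k + 1)))]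
  have h4 := mul_le_mul_of_nonneg_left h2 hq.le
  linarith

/-- **Vanishing error sum** (Lemma A.3): for `q, ε > 0` and `α > 1`,
`lim_{s → 0⁺} Σ_{k ≥ 1} exp(-q s^{-ε α^k}) = 0`, where `s` stays in `(0,1)` and
`s^{-ε α^k} = (1/s)^{ε α^k}`; in particular the series converges for every
`s ∈ (0,1)`. -/
theorem vanishing_error_sum (q ε α : ℝ) (hq : 0 < q) (hε : 0 < ε) (hα : 1 < α) :
    Filter.Tendsto
        (fun s : ℝ => ∑' k : ℕ,
          Real.exp (-q * (1 / s) ^ (ε * α ^ (k + 1))))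
        (nhdsWithin 0 (Set.Ioo 0 1)) (nhds 0) ∧
      ∀ s ∈ Set.Ioo (0 : ℝ) 1,
        Summable (fun k : ℕ => Real.exp (-q * (1 / s) ^ (ε * α ^ (k + 1)))) := by
  refine ⟨?_, ves_summable q ε α hq hε hα⟩
  have hpos : 0 < α := by linarith
  have key := tendsto_tsum_of_dominated_convergence
    (𝓕 := nhdsWithin (0 : ℝ) (Set.Ioo 0 1))
    (f := fun (s : ℝ) (k : ℕ) => Real.exp (-q * (1 / s) ^ (ε * α ^ (k + 1))))
    (g := fun _ => (0 : ℝ))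
    (ves_summable q ε α hq hε hα (1 / 2) (by norm_num)) ?_ ?_
  · simpa using key
  · intro k
    have h0 : Tendsto (fun s : ℝ => 1 / s) (nhdsWithin 0 (Set.Ioo 0 1)) atTop := by
      simp only [one_div]
      exact tendsto_inv_nhdsGT_zero.mono_left (nhdsWithin_mono _ fun x hx => hx.1)
    have h1 := (tendsto_rpow_atTop (y := ε * α ^ (k + 1)) (by positivity)).comp h0
    exact Real.tendsto_exp_atBot.comp (h1.const_mul_atTop_of_neg (by linarith))
  · have hev : ∀ᶠ s : ℝ in nhdsWithin 0 (Set.Ioo 0 1), s < 1 / 2 :=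
      mem_nhdsWithin_of_mem_nhds (Iio_mem_nhds (by norm_num))
    filter_upwards [hev, self_mem_nhdsWithin] with s hs hs' k
    rw [Real.norm_of_nonneg (Real.exp_pos _).le]
    apply Real.exp_le_exp.mpr
    have h5 : (1 / (1 / 2 : ℝ)) ^ (ε * α ^ (k + 1)) ≤ (1 / s) ^ (ε * α ^ (k + 1)) :=
      Real.rpow_le_rpow (by norm_num) (one_div_le_one_div_of_le hs'.1 hs.le) (by positivity)
    have := mul_le_mul_of_nonneg_left h5 hq.le
    linarith
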